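/- There exist bounded linear operators A and B between infinite-dimensional separable Hilbert spaces such that A and B are both non-compact and both have non-closed range, while the composition A∘B is compact; concretely, A = H (the Hausdorff moment operator) and B = C* (the adjoint Cesàro operator) have this property. -/

import Mathlib

/-!
Fubini on the triangle `t < s` gives the intertwining relation `H C* = D H`, with `D` the diagonal
operator with entries `1 / (j + 1)` (`moment_cesaro`). Hence `H C*` is a norm limit of finite-rank
operators, so it is compact (`compact_of_diag`). By the Weierstrass theorem `H` is injective
(`eq_zero_of_moments`), and then so is `C*`, because `D` is injective.

The failures of compactness come from bounded sequences whose images tend to zero coordinatewise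
but not in norm (`compact_contra`). For `H` these are the normalised monomials, which concentrate
at `t = 1`; for `C*` they are the normalised indicators of `(0, 1/(n+1))`, which concentrate at
`t = 0` and satisfy `1 ≤ ‖C* bump‖` (`one_le_norm_cesaro_bump`).

An injective operator with closed range is bounded below. If `H` were bounded below, the lower
bound on `‖C* bump‖` would carry over to the compact operator `H C*`, which is impossible by the
same criterion. And `C*` is not bounded below, since `‖C* tᵏ‖ ≤ 1 / k` while `‖tᵏ‖` is of order
`1 / √k` (`norm_cesaro_mon_le`, `norm_mon_sq`).
-/

open MeasureTheory

noncomputable section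

/-- The Hilbert space `L²(0,1)` (with Lebesgue measure on `(0,1)`). -/
abbrev L2I : Type := Lp ℝ 2 (volume.restrict (Set.Ioo (0:ℝ) 1))

/-- The Hilbert space `ℓ²` of square-summable real sequences (indexed from `0`,
so that the entry of index `j : ℕ` is the `(j+1)`-st component in the paper). -/
abbrev ell2 : Type := lp (fun _ : ℕ => ℝ) 2

/-! ### Monomials and moments -/

local notation "μI" => (volume.restrict (Set.Ioo (0:ℝ) 1))

lemma memLp_pow (k : ℕ) : MemLp (fun t : ℝ => t ^ k) 2 μI := by
  refine MemLp.of_bound (by fun_prop) 1 ?_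
  filter_upwards [ae_restrict_mem measurableSet_Ioo] with t ht
  rw [norm_pow, Real.norm_of_nonneg ht.1.le]
  exact pow_le_one₀ ht.1.le ht.2.le

/-- The monomial `t ↦ t ^ k` as an element of `L²(0,1)`. -/
def mon (k : ℕ) : L2I := (memLp_pow k).toLp _

lemma mon_ae (k : ℕ) : (mon k : ℝ → ℝ) =ᵐ[μI] fun t => t ^ k := (memLp_pow k).coeFn_toLp

lemma L2I_integrable (x : L2I) : Integrable x μI :=
  (Lp.memLp x).integrable (by norm_num)

lemma integral_pow_Ioo {a : ℝ} (ha : 0 ≤ a) (k : ℕ) :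
    ∫ t in Set.Ioo (0:ℝ) a, t ^ k = a ^ (k + 1) / (k + 1) := by
  rw [← integral_Ioc_eq_integral_Ioo, ← intervalIntegral.integral_of_le ha, integral_pow]
  simp

lemma mon_moment (k j : ℕ) :
    ∫ t in Set.Ioo (0:ℝ) 1, mon k t * t ^ j = 1 / ((j : ℝ) + k + 1) := by
  have h : ∫ t in Set.Ioo (0:ℝ) 1, mon k t * t ^ j = ∫ t in Set.Ioo (0:ℝ) 1, t ^ (k + j) := by
    refine integral_congr_ae ?_
    filter_upwards [mon_ae k] with t ht
    rw [ht, pow_add]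
  rw [h, integral_pow_Ioo zero_le_one]
  push_cast
  rw [one_pow, add_comm (k : ℝ)]

lemma norm_mon_sq (k : ℕ) : ‖mon k‖ ^ 2 = 1 / (2 * (k : ℝ) + 1) := by
  rw [← real_inner_self_eq_norm_sq, L2.inner_def, two_mul, ← mon_moment]
  refine integral_congr_ae ?_
  filter_upwards [mon_ae k] with t ht
  rw [ht, real_inner_self_eq_norm_sq, norm_pow, Real.norm_eq_abs, ← pow_mul, mul_comm k,
    pow_mul, sq_abs, ← pow_mul, two_mul, pow_add]

lemma integrable_mul_of_continuous (x : L2I) {g : ℝ → ℝ} (hg : Continuous g) :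
    Integrable (fun t => x t * g t) μI := by
  obtain ⟨C, hC⟩ := isCompact_Icc.exists_bound_of_continuousOn (s := Set.Icc (0:ℝ) 1)
    hg.continuousOn
  refine (L2I_integrable x).mul_bdd (c := C) hg.aestronglyMeasurable ?_
  filter_upwards [ae_restrict_mem measurableSet_Ioo] with t ht
  exact hC t ⟨ht.1.le, ht.2.le⟩

/-- A function in `L²(0,1)` all of whose moments vanish is zero: by the Weierstrass theorem it
integrates to zero against every continuous function. -/
lemma eq_zero_of_moments (x : L2I) (hx : ∀ j : ℕ, ∫ t in Set.Ioo (0:ℝ) 1, x t * t ^ j = 0) :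
    x = 0 := by
  have hpoly : ∀ p : Polynomial ℝ, ∫ t in Set.Ioo (0:ℝ) 1, x t * p.eval t = 0 := by
    intro p
    simp_rw [Polynomial.eval_eq_sum_range, Finset.mul_sum]
    rw [integral_finsetSum]
    · refine Finset.sum_eq_zero fun j _ => ?_
      simp_rw [mul_left_comm]
      rw [integral_const_mul, hx, mul_zero]
    · intro j _
      exact integrable_mul_of_continuous x (by fun_prop)
  have hcont : ∀ g : ℝ → ℝ, Continuous g → ∫ t in Set.Ioo (0:ℝ) 1, x t * g t = 0 := by
    intro g hg
    have key : ∀ ε > 0, |∫ t in Set.Ioo (0:ℝ) 1, x t * g t|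
        ≤ ε * ∫ t in Set.Ioo (0:ℝ) 1, |x t| := by
      intro ε hε
      obtain ⟨p, hp⟩ := exists_polynomial_near_of_continuousOn 0 1 g hg.continuousOn ε hε
      have h1 : ∫ t in Set.Ioo (0:ℝ) 1, x t * g t
          = ∫ t in Set.Ioo (0:ℝ) 1, x t * (g t - p.eval t) := by
        simp_rw [mul_sub]
        rw [integral_sub (integrable_mul_of_continuous x hg)
          (integrable_mul_of_continuous x p.continuous), hpoly, sub_zero]
      rw [h1, ← integral_const_mul, ← Real.norm_eq_abs]
      refine norm_integral_le_of_norm_le ((L2I_integrable x).abs.const_mul ε) ?_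
      filter_upwards [ae_restrict_mem measurableSet_Ioo] with t ht
      rw [norm_mul, mul_comm, Real.norm_eq_abs, Real.norm_eq_abs, abs_sub_comm]
      exact mul_le_mul_of_nonneg_right (hp t ⟨ht.1.le, ht.2.le⟩).le (abs_nonneg _)
    set M := ∫ t in Set.Ioo (0:ℝ) 1, |x t|
    have hM : 0 ≤ M := integral_nonneg fun t => abs_nonneg _
    refine abs_eq_zero.1 (le_antisymm (le_of_forall_pos_le_add fun ε hε => ?_) (abs_nonneg _))
    refine (key (ε / (M + 1)) (by positivity)).trans ?_
    rw [zero_add, div_mul_eq_mul_div, div_le_iff₀ (by positivity)]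
    nlinarith
  rw [Lp.eq_zero_iff_ae_eq_zero]
  refine ae_eq_zero_of_integral_contDiff_smul_eq_zero (L2I_integrable x).locallyIntegrable ?_
  intro g hg _
  simp_rw [smul_eq_mul, mul_comm (g _)]
  exact hcont g hg.continuous

/-! ### The intertwining relation -/

/-- Exchanging the order of integration over the triangle `t < s`; for `y = Cs x` this is the
intertwining relation `H C* = D H`, where `D` is the diagonal operator with entries
`1 / (j + 1)`. -/
lemma moment_cesaro (x y : L2I)
    (hy : ∀ᵐ t ∂μI, y t = ∫ s in Set.Ioo t 1, x s / s) (j : ℕ) :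
    ∫ t in Set.Ioo (0:ℝ) 1, y t * t ^ j
      = (1 / ((j : ℝ) + 1)) * ∫ t in Set.Ioo (0:ℝ) 1, x t * t ^ j := by
  -- the kernel on the unit square
  let F : ℝ → ℝ → ℝ := fun t s => (Set.Ioi t).indicator (fun s => x s / s) s * t ^ j
  have hF : ∀ t s, F t s = (Set.Iio s).indicator (fun t => x s / s * t ^ j) t := by
    intro t s
    by_cases h : t < s <;> simp [F, h]
  have hin : ∀ s ∈ Set.Ioo (0:ℝ) 1, ∀ c : ℝ,
      ∫ t in Set.Ioo (0:ℝ) 1, (Set.Iio s).indicator (fun t => c / s * t ^ j) t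
        = (1 / ((j : ℝ) + 1)) * (c * s ^ j) := by
    intro s hs c
    have hset : Set.Ioo (0:ℝ) 1 ∩ Set.Iio s = Set.Ioo 0 s := by
      rw [Set.Ioo_inter_Iio, min_eq_right hs.2.le]
    rw [setIntegral_indicator measurableSet_Iio, hset, integral_const_mul,
      integral_pow_Ioo hs.1.le]
    have := hs.1.ne'
    have : (j : ℝ) + 1 ≠ 0 := by positivity
    field_simp
    ring
  have hmeas : AEStronglyMeasurable (Function.uncurry F) (Measure.prod μI μI) := by
    have h1 : AEStronglyMeasurable (fun z : ℝ × ℝ => x z.2 / z.2 * z.1 ^ j) (Measure.prod μI μI) := by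
      have hx : AEStronglyMeasurable (fun z : ℝ × ℝ => x z.2) (Measure.prod μI μI) :=
        (Lp.aestronglyMeasurable x).comp_snd
      have h2 : AEStronglyMeasurable (fun z : ℝ × ℝ => z.2⁻¹) (Measure.prod μI μI) :=
        (measurable_snd.inv).aestronglyMeasurable
      simp_rw [div_eq_mul_inv]
      exact (hx.mul h2).mul (by fun_prop)
    have h3 : MeasurableSet {z : ℝ × ℝ | z.1 < z.2} :=
      measurableSet_lt measurable_fst measurable_snd
    refine (h1.indicator h3).congr (Filter.Eventually.of_forall fun z => ?_)
    by_cases h : z.1 < z.2 <;> simp [F, Function.uncurry, Set.indicator, h]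
  have hFint : Integrable (Function.uncurry F) (Measure.prod μI μI) := by
    rw [integrable_prod_iff' hmeas]
    refine ⟨?_, ?_⟩
    · filter_upwards with s
      simp only [Function.uncurry, hF]
      refine Integrable.indicator ?_ measurableSet_Iio
      exact ((by fun_prop : Continuous fun t : ℝ => x s / s * t ^ j).integrableOn_Icc
        (a := 0) (b := 1)).mono_set Set.Ioo_subset_Icc_self
    · have hI : Integrable (fun s => (1 / ((j : ℝ) + 1)) * (|x s * s ^ j|)) μI :=
        (integrable_mul_of_continuous x (by fun_prop)).abs.const_mul _
      refine hI.congr ?_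
      filter_upwards [ae_restrict_mem measurableSet_Ioo] with s hs
      rw [abs_mul, abs_of_nonneg (pow_nonneg hs.1.le j), ← hin s hs]
      refine setIntegral_congr_fun measurableSet_Ioo fun t ht => ?_
      simp only [Function.uncurry, hF]
      by_cases h : t < s
      · simp [h, abs_of_pos hs.1, abs_of_pos ht.1]
      · simp [h]
  have hswap := integral_integral_swap hFint
  have hL : ∫ t in Set.Ioo (0:ℝ) 1, y t * t ^ j
      = ∫ t in Set.Ioo (0:ℝ) 1, ∫ s in Set.Ioo (0:ℝ) 1, F t s := by
    refine integral_congr_ae ?_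
    filter_upwards [hy, ae_restrict_mem measurableSet_Ioo] with t ht hti
    have hset : Set.Ioo (0:ℝ) 1 ∩ Set.Ioi t = Set.Ioo t 1 := by
      rw [Set.Ioo_inter_Ioi, max_eq_right hti.1.le]
    simp only [F]
    rw [integral_mul_const, setIntegral_indicator measurableSet_Ioi, hset, ht]
  rw [hL, hswap, ← integral_const_mul]
  refine setIntegral_congr_fun measurableSet_Ioo fun s hs => ?_
  simp only [hF]
  exact hin s hs (x s)

/-! ### Compactness criteria -/

/-- If `T` is compact and the images `T (x n)` of a bounded sequence tend to zero in every
coordinate, read off through an injective operator `S` into `ℓ²`, then zero is their only possible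
limit point, so their norms have no positive lower bound. -/
lemma compact_contra {F : Type*} [NormedAddCommGroup F] [NormedSpace ℝ F]
    (T : L2I →L[ℝ] F) (hT : IsCompactOperator T) (S : F →L[ℝ] ell2)
    (hS : ∀ y, S y = 0 → y = 0) (x : ℕ → L2I) (hx : ∀ n, ‖x n‖ ≤ 1)
    (h0 : ∀ j : ℕ, Filter.Tendsto (fun n => S (T (x n)) j) Filter.atTop (nhds 0))
    {c : ℝ} (hc : 0 < c) (hlow : ∀ n, c ≤ ‖T (x n)‖) : False := by
  obtain ⟨K, hK, hsub⟩ := hT.image_closedBall_subset_compact (𝕜₁ := ℝ) (f := T.toLinearMap) 1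
  have hmem : ∀ n, T (x n) ∈ K := fun n => hsub ⟨x n, by simpa using hx n, rfl⟩
  obtain ⟨y, -, φ, hφ, hlim⟩ := hK.tendsto_subseq hmem
  have hy : S y = 0 := by
    ext j
    have hcont : Continuous fun z : F => (S z : ell2) j :=
      ((lp.evalCLM (𝕜 := ℝ) (fun _ : ℕ => ℝ) 2 j).comp S).continuous
    have h1 := (hcont.tendsto y).comp hlim
    have h2 := (h0 j).comp hφ.tendsto_atTop
    exact tendsto_nhds_unique h1 h2
  rw [hS y hy] at hlim
  have := ge_of_tendsto' hlim.norm (fun n => hlow (φ n))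
  rw [norm_zero] at this
  linarith

/-- An operator into `ℓ²` whose coordinates are those of a bounded operator multiplied by
`1 / (j + 1)` is compact, as the norm limit of its coordinate truncations. -/
lemma compact_of_diag (H T : L2I →L[ℝ] ell2)
    (h : ∀ x (j : ℕ), T x j = (1 / ((j : ℝ) + 1)) * H x j) : IsCompactOperator T := by
  let R : ℕ → (L2I →L[ℝ] ell2) := fun N => ∑ j ∈ Finset.range N,
    (lp.singleContinuousLinearMap ℝ (fun _ : ℕ => ℝ) 2 j).comp
      ((lp.evalCLM (𝕜 := ℝ) (fun _ : ℕ => ℝ) 2 j).comp T)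
  have hRx : ∀ N x (i : ℕ), R N x i = if i < N then T x i else 0 := by
    intro N x i
    simp only [R, sum_apply, ContinuousLinearMap.comp_apply,
      lp.singleContinuousLinearMap_apply, lp.coeFn_sum, Finset.sum_apply, lp.single_apply]
    split_ifs with hi
    · rw [Finset.sum_eq_single i]
      · rw [Pi.single_eq_same]
        rfl
      · intro c _ hc
        exact Pi.single_eq_of_ne hc.symm _
      · intro hn
        exact absurd (Finset.mem_range.2 hi) hn
    · refine Finset.sum_eq_zero fun c hc => Pi.single_eq_of_ne ?_ _
      rintro rfl
      exact hi (Finset.mem_range.1 hc)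
  have hRc : ∀ N, IsCompactOperator (R N) := by
    intro N
    have : R N ∈ compactOperator (RingHom.id ℝ) L2I ell2 := by
      refine Submodule.sum_mem _ fun j _ => ?_
      exact (isCompactOperator_of_locallyCompactSpace_dom
        ((lp.evalCLM (𝕜 := ℝ) (fun _ : ℕ => ℝ) 2 j).comp T)).clm_comp
        (lp.singleContinuousLinearMap ℝ (fun _ : ℕ => ℝ) 2 j)
    exact this
  have hnorm : ∀ N, ‖R N - T‖ ≤ ‖H‖ * (1 / ((N : ℝ) + 1)) := by
    intro N
    refine ContinuousLinearMap.opNorm_le_bound _ (by positivity) fun x => ?_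
    have h1 : ‖(R N - T) x‖ ≤ ‖(1 / ((N : ℝ) + 1)) • H x‖ := by
      refine lp.norm_mono (by norm_num) fun i => ?_
      rw [sub_apply, lp.coeFn_sub, Pi.sub_apply, hRx, lp.coeFn_smul,
        Pi.smul_apply, smul_eq_mul]
      split_ifs with hi
      · rw [sub_self, norm_zero]
        positivity
      · have hNi : (N : ℝ) ≤ i := by exact_mod_cast not_lt.1 hi
        rw [zero_sub, norm_neg, h, norm_mul, norm_mul,
          Real.norm_of_nonneg (by positivity : 0 ≤ 1 / ((i : ℝ) + 1)),
          Real.norm_of_nonneg (by positivity : 0 ≤ 1 / ((N : ℝ) + 1))]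
        gcongr
    refine h1.trans ?_
    rw [norm_smul, Real.norm_of_nonneg (by positivity)]
    nlinarith [H.le_opNorm x, (by positivity : 0 < 1 / ((N : ℝ) + 1))]
  have hlim : Filter.Tendsto R Filter.atTop (nhds T) := by
    rw [tendsto_iff_norm_sub_tendsto_zero]
    refine squeeze_zero (fun _ => norm_nonneg _) hnorm ?_
    simpa using tendsto_one_div_add_atTop_nhds_zero_nat.const_mul ‖H‖
  exact isCompactOperator_of_tendsto hlim (Filter.Eventually.of_forall hRc)

/-! ### Normalised indicators near zero -/

/-- The function `√(n + 1)` times the indicator of `(0, 1/(n+1))`, a unit vector of `L²(0,1)`. -/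
def bump (n : ℕ) : L2I :=
  indicatorConstLp (μ := μI) 2 (s := Set.Ioo (0:ℝ) (1 / ((n : ℝ) + 1))) measurableSet_Ioo
    (measure_ne_top _ _) (√((n : ℝ) + 1))

lemma bump_ae (n : ℕ) : (bump n : ℝ → ℝ) =ᵐ[μI]
    (Set.Ioo (0:ℝ) (1 / ((n : ℝ) + 1))).indicator fun _ => √((n : ℝ) + 1) :=
  indicatorConstLp_coeFn

lemma one_div_succ_le_one (n : ℕ) : 1 / ((n : ℝ) + 1) ≤ 1 := by
  rw [div_le_one (by positivity)]
  linarith [(Nat.cast_nonneg n : (0:ℝ) ≤ n)]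

lemma integral_bump_mul (n : ℕ) (g : ℝ → ℝ) :
    ∫ t in Set.Ioo (0:ℝ) 1, bump n t * g t
      = √((n : ℝ) + 1) * ∫ t in Set.Ioo (0:ℝ) (1 / ((n : ℝ) + 1)), g t := by
  have h : ∫ t in Set.Ioo (0:ℝ) 1, bump n t * g t = ∫ t in Set.Ioo (0:ℝ) 1,
      (Set.Ioo (0:ℝ) (1 / ((n : ℝ) + 1))).indicator (fun t => √((n : ℝ) + 1) * g t) t := by
    refine integral_congr_ae ?_
    filter_upwards [bump_ae n] with t ht
    rw [ht, Set.indicator_mul_left]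
  rw [h, setIntegral_indicator measurableSet_Ioo, Set.Ioo_inter_Ioo, max_self,
    min_eq_right (one_div_succ_le_one n), integral_const_mul]

lemma bump_moment (n j : ℕ) : ∫ t in Set.Ioo (0:ℝ) 1, bump n t * t ^ j
    = √((n : ℝ) + 1) * ((1 / ((n : ℝ) + 1)) ^ (j + 1) / (j + 1)) := by
  rw [integral_bump_mul, integral_pow_Ioo (by positivity)]

lemma norm_bump (n : ℕ) : ‖bump n‖ = 1 := by
  have h : ‖bump n‖ ^ 2 = 1 := by
    rw [← real_inner_self_eq_norm_sq, bump, L2.inner_indicatorConstLp_eq_inner_setIntegral,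
      ← bump]
    have h1 : ∫ t in Set.Ioo (0:ℝ) (1 / ((n : ℝ) + 1)), bump n t ∂μI
        = √((n : ℝ) + 1) * (1 / ((n : ℝ) + 1)) := by
      rw [bump, setIntegral_indicatorConstLp measurableSet_Ioo, Set.inter_self, smul_eq_mul,
        measureReal_restrict_apply measurableSet_Ioo, Set.Ioo_inter_Ioo, max_self,
        min_eq_left (one_div_succ_le_one n), Real.volume_real_Ioo_of_le (by positivity)]
      ring
    rw [h1]
    have h2 : √((n : ℝ) + 1) * √((n : ℝ) + 1) = n + 1 := Real.mul_self_sqrt (by positivity)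
    simp only [RCLike.inner_apply, conj_trivial]
    rw [mul_right_comm, h2]
    field_simp
  nlinarith [norm_nonneg (bump n)]

/-- `C*` does not shrink the bumps: `C* (bump n)` vanishes beyond `1/(n+1)`, so its inner product
with `bump n` is a multiple of its zeroth moment, and that one is the zeroth moment of `bump n`
by `moment_cesaro`. -/
lemma one_le_norm_cesaro_bump (n : ℕ) (y : L2I)
    (hy : ∀ᵐ t ∂μI, y t = ∫ s in Set.Ioo t 1, bump n s / s) : 1 ≤ ‖y‖ := by
  have hmom := moment_cesaro (bump n) y hy 0
  rw [bump_moment] at hmom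
  simp only [pow_zero, mul_one, Nat.cast_zero, zero_add, pow_one, div_one, one_mul] at hmom
  have hsupp : ∀ᵐ t ∂μI, t ∉ Set.Ioo (0:ℝ) (1 / ((n : ℝ) + 1)) → y t = 0 := by
    filter_upwards [hy, ae_restrict_mem measurableSet_Ioo] with t ht hti hn
    have hle : 1 / ((n : ℝ) + 1) ≤ t := not_lt.1 fun h => hn ⟨hti.1, h⟩
    rw [ht]
    have hsub : Set.Ioo t 1 ⊆ Set.Ioo (0:ℝ) 1 := Set.Ioo_subset_Ioo_left hti.1.le
    refine integral_eq_zero_of_ae ?_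
    filter_upwards [ae_restrict_of_ae_restrict_of_subset hsub (bump_ae n),
      ae_restrict_mem measurableSet_Ioo] with s hs hsi
    have : s ∉ Set.Ioo (0:ℝ) (1 / ((n : ℝ) + 1)) := fun h => by linarith [h.2, hsi.1]
    rw [hs, Set.indicator_of_notMem this, zero_div, Pi.zero_apply]
  have hinner : inner ℝ (bump n) y = 1 := by
    rw [bump, L2.inner_indicatorConstLp_eq_inner_setIntegral,
      setIntegral_eq_integral_of_ae_compl_eq_zero hsupp, hmom]
    have h2 : √((n : ℝ) + 1) * √((n : ℝ) + 1) = n + 1 := Real.mul_self_sqrt (by positivity)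
    simp only [RCLike.inner_apply, conj_trivial]
    rw [mul_right_comm, h2]
    field_simp
  have := real_inner_le_norm (bump n) y
  rwa [hinner, norm_bump, one_mul] at this

lemma tendsto_bump_moment (j : ℕ) :
    Filter.Tendsto (fun n => ∫ t in Set.Ioo (0:ℝ) 1, bump n t * t ^ j) Filter.atTop (nhds 0) := by
  have hlim : Filter.Tendsto (fun n : ℕ => √(1 / ((n : ℝ) + 1))) Filter.atTop (nhds 0) := by
    simpa using (tendsto_one_div_add_atTop_nhds_zero_nat (𝕜 := ℝ)).sqrt
  refine squeeze_zero (fun n => ?_) (fun n => ?_) hlim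
  · rw [bump_moment]; positivity
  · rw [bump_moment]
    have ha : 0 ≤ 1 / ((n : ℝ) + 1) := by positivity
    have h1 : (1 / ((n : ℝ) + 1)) ^ (j + 1) / (j + 1) ≤ 1 / ((n : ℝ) + 1) := by
      refine (div_le_self (by positivity) (by linarith [(Nat.cast_nonneg j : (0:ℝ) ≤ j)])).trans ?_
      exact pow_le_of_le_one ha (one_div_succ_le_one n) (Nat.succ_ne_zero j)
    refine (mul_le_mul_of_nonneg_left h1 (Real.sqrt_nonneg _)).trans (le_of_eq ?_)
    rw [Real.sqrt_div zero_le_one, Real.sqrt_one, mul_one_div, Real.sqrt_div_self']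

/-! ### The Cesàro operator on monomials -/

/-- `‖C* tᵏ⁺¹‖ ≤ 1 / (k + 1)`, which is of smaller order than `‖tᵏ⁺¹‖`. -/
lemma norm_cesaro_mon_le (k : ℕ) (y : L2I)
    (hy : ∀ᵐ t ∂μI, y t = ∫ s in Set.Ioo t 1, mon (k + 1) s / s) :
    ‖y‖ ≤ 1 / ((k : ℝ) + 1) := by
  have hb : ∀ᵐ t ∂μI, ‖y t‖ ≤ 1 / ((k : ℝ) + 1) := by
    filter_upwards [hy, ae_restrict_mem measurableSet_Ioo] with t ht hti
    have hsub : Set.Ioo t 1 ⊆ Set.Ioo (0:ℝ) 1 := Set.Ioo_subset_Ioo_left hti.1.le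
    have h1 : ∫ s in Set.Ioo t 1, mon (k + 1) s / s = ∫ s in Set.Ioo t 1, s ^ k := by
      refine integral_congr_ae ?_
      filter_upwards [ae_restrict_of_ae_restrict_of_subset hsub (mon_ae (k + 1)),
        ae_restrict_mem measurableSet_Ioo] with s hs hsi
      have : s ≠ 0 := (hti.1.trans hsi.1).ne'
      rw [hs, pow_succ, mul_div_assoc, div_self this, mul_one]
    rw [ht, h1, ← integral_Ioc_eq_integral_Ioo, ← intervalIntegral.integral_of_le hti.2.le,
      integral_pow, one_pow]
    have ht0 : 0 ≤ t ^ (k + 1) := pow_nonneg hti.1.le _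
    have ht1 : t ^ (k + 1) ≤ 1 := pow_le_one₀ hti.1.le hti.2.le
    rw [Real.norm_of_nonneg (div_nonneg (by linarith) (by positivity))]
    gcongr
    linarith
  have := Lp.norm_le_of_ae_bound (by positivity) hb
  have h1 : measureUnivNNReal μI = 1 := by simp [measureUnivNNReal]
  simpa [h1] using this

/-! ### Non-compactness and non-closed ranges -/

/-- There exist bounded linear operators `A` and `B` between
infinite-dimensional separable Hilbert spaces such that `A` and `B` are both
non-compact and both have non-closed range, while the composition `A ∘ B` is
compact; concretely, `A = H` (the Hausdorff moment operator) and `B = C*` (the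
adjoint Cesàro operator) have this property. -/
theorem statement19
    (H : L2I →L[ℝ] ell2) (Cs : L2I →L[ℝ] L2I)
    (hH : ∀ (x : L2I) (j : ℕ), H x j = ∫ t in Set.Ioo (0:ℝ) 1, x t * t ^ j)
    (hC : ∀ x : L2I, ∀ᵐ t ∂(volume.restrict (Set.Ioo (0:ℝ) 1)),
      Cs x t = ∫ s in Set.Ioo t 1, x s / s) :
    (¬ IsCompactOperator H ∧ ¬ IsCompactOperator Cs ∧
      ¬ IsClosed (Set.range H) ∧ ¬ IsClosed (Set.range Cs) ∧
      IsCompactOperator (H.comp Cs)) ∧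
    (∃ A : L2I →L[ℝ] ell2, ∃ B : L2I →L[ℝ] L2I,
      ¬ IsCompactOperator A ∧ ¬ IsCompactOperator B ∧
      ¬ IsClosed (Set.range A) ∧ ¬ IsClosed (Set.range B) ∧
      IsCompactOperator (A.comp B)) := by
  have hHC : ∀ x (j : ℕ), H (Cs x) j = (1 / ((j : ℝ) + 1)) * H x j := fun x j => by
    rw [hH, hH, moment_cesaro x _ (hC x)]
  have hHker : ∀ x, H x = 0 → x = 0 := fun x hx =>
    eq_zero_of_moments x fun j => by rw [← hH, hx]; rfl
  have hCker : ∀ x, Cs x = 0 → x = 0 := by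
    refine fun x hx => hHker x ?_
    ext j
    have h := hHC x j
    rw [hx, map_zero] at h
    have hj : (1 / ((j : ℝ) + 1)) ≠ 0 := by positivity
    exact (mul_eq_zero.1 h.symm).resolve_left hj
  have hHinj : Function.Injective H := (injective_iff_map_eq_zero H).2 hHker
  have hCinj : Function.Injective Cs := (injective_iff_map_eq_zero Cs).2 hCker
  have hcomp : IsCompactOperator (H.comp Cs) := compact_of_diag H (H.comp Cs) hHC
  have hClow : ∀ n, 1 ≤ ‖Cs (bump n)‖ := fun n => one_le_norm_cesaro_bump n _ (hC _)
  have hHCbump : ∀ j : ℕ, Filter.Tendsto (fun n => H (Cs (bump n)) j) Filter.atTop (nhds 0) := by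
    intro j
    simp_rw [hHC, hH]
    simpa using (tendsto_bump_moment j).const_mul (1 / ((j : ℝ) + 1))
  have hHnc : ¬ IsCompactOperator H := by
    intro hc
    -- the normalised monomials `√(2n+1) tⁿ`
    have hsq : ∀ n : ℕ, √(2 * (n : ℝ) + 1) ^ 2 = 2 * n + 1 := fun n =>
      Real.sq_sqrt (by positivity)
    have hcoord : ∀ n j : ℕ, H (√(2 * (n : ℝ) + 1) • mon n) j
        = √(2 * (n : ℝ) + 1) * (1 / ((j : ℝ) + n + 1)) := by
      intro n j
      rw [map_smul, lp.coeFn_smul, Pi.smul_apply, smul_eq_mul, hH, mon_moment]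
    refine compact_contra H hc (ContinuousLinearMap.id ℝ ell2) (fun _ h => h)
      (fun n => √(2 * (n : ℝ) + 1) • mon n) (fun n => ?_) (fun j => ?_)
      (c := 1 / 2) (by norm_num) (fun n => ?_)
    · rw [norm_smul, Real.norm_of_nonneg (Real.sqrt_nonneg _)]
      refine (sq_le_one_iff₀ (by positivity)).1 (le_of_eq ?_)
      rw [mul_pow, hsq, norm_mon_sq]
      field_simp
    · have hlim : Filter.Tendsto (fun n : ℕ => 2 * √(1 / ((n : ℝ) + 1)))
          Filter.atTop (nhds 0) := by
        simpa using (tendsto_one_div_add_atTop_nhds_zero_nat (𝕜 := ℝ)).sqrt.const_mul 2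
      simp only [ContinuousLinearMap.id_apply, hcoord]
      refine squeeze_zero (fun n => by positivity) (fun n => ?_) hlim
      have hn : (0:ℝ) < (n : ℝ) + 1 := by positivity
      have h1 : √(2 * (n : ℝ) + 1) ≤ 2 * √((n : ℝ) + 1) := by
        refine Real.sqrt_le_iff.2 ⟨by positivity, ?_⟩
        rw [mul_pow, Real.sq_sqrt hn.le]
        linarith
      have h2 : 1 / ((j : ℝ) + n + 1) ≤ 1 / ((n : ℝ) + 1) := by
        gcongr
        linarith [(Nat.cast_nonneg j : (0:ℝ) ≤ j)]
      refine (mul_le_mul h1 h2 (by positivity) (by positivity)).trans (le_of_eq ?_)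
      rw [Real.sqrt_div zero_le_one, Real.sqrt_one, mul_assoc, mul_one_div, Real.sqrt_div_self']
    · have h1 := lp.sum_rpow_le_norm_rpow (p := 2) (by norm_num)
        (H (√(2 * (n : ℝ) + 1) • mon n)) (Finset.range (n + 1))
      -- each of the first `n + 1` coordinates is at least `1 / √(2n+1)`
      have h2 : ((n : ℝ) + 1) * (1 / (2 * (n : ℝ) + 1)) ≤ ∑ i ∈ Finset.range (n + 1),
          ‖H (√(2 * (n : ℝ) + 1) • mon n) i‖ ^ (2 : ENNReal).toReal := by
        have h3 : ∀ i ∈ Finset.range (n + 1), 1 / (2 * (n : ℝ) + 1) ≤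
            ‖H (√(2 * (n : ℝ) + 1) • mon n) i‖ ^ (2 : ENNReal).toReal := by
          intro i hi
          have hi' : (i : ℝ) ≤ n := by exact_mod_cast Nat.lt_succ_iff.1 (Finset.mem_range.1 hi)
          rw [hcoord, ENNReal.toReal_ofNat, Real.rpow_two, Real.norm_eq_abs, sq_abs, mul_pow, hsq,
            div_pow, one_pow, mul_one_div, div_le_div_iff₀ (by positivity) (by positivity)]
          have hi0 : (0:ℝ) ≤ i := Nat.cast_nonneg i
          have hn0 : (0:ℝ) ≤ n := Nat.cast_nonneg n
          nlinarith
        have := Finset.card_nsmul_le_sum _ _ _ h3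
        rw [Finset.card_range, nsmul_eq_mul] at this
        exact_mod_cast this
      have h4 := h2.trans h1
      rw [ENNReal.toReal_ofNat, Real.rpow_two] at h4
      have h5 : (1:ℝ) / 2 ≤ ((n : ℝ) + 1) * (1 / (2 * (n : ℝ) + 1)) := by
        rw [mul_one_div, div_le_div_iff₀ (by positivity) (by positivity)]
        linarith
      nlinarith [norm_nonneg (H (√(2 * (n : ℝ) + 1) • mon n))]
  have hCnc : ¬ IsCompactOperator Cs := fun hc =>
    compact_contra Cs hc H hHker bump (fun n => (norm_bump n).le) hHCbump one_pos hClow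
  have hHr : ¬ IsClosed (Set.range H) := by
    intro hcl
    obtain ⟨K, hK⟩ := H.antilipschitz_of_injective_of_isClosed_range hHinj hcl
    have hb : ∀ x, ‖x‖ ≤ K * ‖H x‖ := fun x => by simpa using hK.le_mul_dist x 0
    have hlow : ∀ n, 1 / ((K : ℝ) + 1) ≤ ‖(H.comp Cs) (bump n)‖ := by
      intro n
      rw [div_le_iff₀ (by positivity), ContinuousLinearMap.comp_apply]
      nlinarith [hb (Cs (bump n)), hClow n, norm_nonneg (H (Cs (bump n)))]
    exact compact_contra (H.comp Cs) hcomp (ContinuousLinearMap.id ℝ ell2) (fun _ h => h) bump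
      (fun n => (norm_bump n).le) hHCbump (by positivity) hlow
  have hCr : ¬ IsClosed (Set.range Cs) := by
    intro hcl
    obtain ⟨K, hK⟩ := Cs.antilipschitz_of_injective_of_isClosed_range hCinj hcl
    have hb : ∀ x, ‖x‖ ≤ K * ‖Cs x‖ := fun x => by simpa using hK.le_mul_dist x 0
    obtain ⟨k, hk⟩ := exists_nat_gt (3 * (K : ℝ) ^ 2)
    have h1 : ‖mon (k + 1)‖ ≤ K * (1 / ((k : ℝ) + 1)) :=
      (hb _).trans (mul_le_mul_of_nonneg_left (norm_cesaro_mon_le k _ (hC _)) K.2)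
    have h2 := pow_le_pow_left₀ (norm_nonneg _) h1 2
    rw [norm_mon_sq, mul_pow, div_pow, one_pow, mul_one_div,
      div_le_div_iff₀ (by positivity) (by positivity)] at h2
    push_cast at h2
    have hk0 : (0:ℝ) ≤ k := Nat.cast_nonneg k
    nlinarith [sq_nonneg (K : ℝ)]
  exact ⟨⟨hHnc, hCnc, hHr, hCr, hcomp⟩, H, Cs, hHnc, hCnc, hHr, hCr, hcomp⟩

end
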